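/- Let l₀ > 0 and λ₂ < λ₁ be given. Let Γ^s ⊆ Λ and suppose that for each x ∈ Γ^s there are closed subspaces E^u(x), E^s(x) satisfying: (S1) X = E^u(x) ⊕ E^s(x); (S2) |Df^n_x v| ≥ l₀^{−1} e^{nλ₁} |v| for all v ∈ E^u(x) and all n ≥ 0; (S3) ‖Df^n_x|_{E^s(x)}‖ ≤ l₀ e^{nλ₂} for all n ≥ 0; (S4) the projections associated with the splitting X = E^u(x) ⊕ E^s(x) have norm at most l₀. Then for every a > max{e^{λ₁}, b L^α}, where b = sup_{x∈Λ} ‖Df_x‖ and L = max{1, Lip(f|_Λ)}, there exists K > 0 such that dist(E^s(x), E^s(y)) ≤ K |x − y|^β for all x, y ∈ Γ^s, with exponent β = α(λ₁ − λ₂)/(log a − λ₂). -/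

import Mathlib

/-- Kato's gap metric between two subspaces: the Hausdorff distance between their
intersections with the unit sphere. -/
noncomputable def gapDist {X : Type*} [NormedAddCommGroup X] [NormedSpace ℝ X]
    (E F : Submodule ℝ X) : ℝ :=
  Metric.hausdorffDist ((E : Set X) ∩ Metric.sphere 0 1) ((F : Set X) ∩ Metric.sphere 0 1)

/-- `fwdDeriv f n x = Df_{f^{n-1}x} ∘ ⋯ ∘ Df_{fx} ∘ Df_x`, the derivative of `f^n`
at `x`. -/
noncomputable def fwdDeriv {X : Type*} [NormedAddCommGroup X] [NormedSpace ℝ X]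
    (f : X → X) : ℕ → X → (X →L[ℝ] X)
  | 0, _ => ContinuousLinearMap.id ℝ X
  | n + 1, x => (fderiv ℝ f (f^[n] x)).comp (fwdDeriv f n x)

/-!
If `v` is a unit vector of `E^s(x)`, its distance to `E^s(y)` is at most the norm of its component
`u` in `E^u(y)`. Since `Df^n_y` expands `u` by `e^{nλ₁}` while `Df^n_y v` is bounded by `e^{nλ₂}`
plus the error `‖Df^n_x - Df^n_y‖ ≲ aⁿ |x - y|^α`, the component `u` is of order `e^{-n(λ₁ - λ₂)}`
as long as the error stays below `e^{nλ₂}`. The largest such `n` is about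
`-α log |x - y| / (log a - λ₂)`, which gives the exponent `β`. The argument only sees the operators
`Df^n_x`, so it applies to any Hölder linear cocycle over a Lipschitz map.
-/

open Set Metric

section GapDist

variable {X : Type*} [NormedAddCommGroup X] [NormedSpace ℝ X] {E F : Submodule ℝ X} {v w : X}

theorem norm_sub_inv_norm_smul_self (hw : w ≠ 0) : ‖w - ‖w‖⁻¹ • w‖ = |‖w‖ - 1| := by
  have hw' : ‖w‖ ≠ 0 := norm_ne_zero_iff.2 hw
  calc ‖w - ‖w‖⁻¹ • w‖ = ‖(1 - ‖w‖⁻¹) • w‖ := by rw [sub_smul, one_smul]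
    _ = |(1 - ‖w‖⁻¹) * ‖w‖| := by rw [norm_smul, Real.norm_eq_abs, abs_mul, abs_norm]
    _ = |‖w‖ - 1| := by rw [sub_mul, one_mul, inv_mul_cancel₀ hw']

theorem exists_mem_sphere_dist_le_two_mul (hF : ((F : Set X) ∩ sphere 0 1).Nonempty)
    (hv : ‖v‖ = 1) (hw : w ∈ F) :
    ∃ z ∈ (F : Set X) ∩ sphere 0 1, dist v z ≤ 2 * ‖v - w‖ := by
  rcases eq_or_ne w 0 with rfl | hw0
  · obtain ⟨z, hz⟩ := hF
    have hz1 : ‖z‖ = 1 := mem_sphere_zero_iff_norm.1 hz.2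
    refine ⟨z, hz, ?_⟩
    rw [dist_eq_norm, sub_zero]
    linarith [norm_sub_le v z]
  · have hunit : ‖‖w‖⁻¹ • w‖ = 1 := norm_smul_inv_norm (𝕜 := ℝ) hw0
    refine ⟨‖w‖⁻¹ • w, ⟨F.smul_mem _ hw, mem_sphere_zero_iff_norm.2 hunit⟩, ?_⟩
    calc dist v (‖w‖⁻¹ • w) ≤ ‖v - w‖ + ‖w - ‖w‖⁻¹ • w‖ := by
          rw [dist_eq_norm]; exact norm_sub_le_norm_sub_add_norm_sub _ _ _
      _ = ‖v - w‖ + |‖w‖ - ‖v‖| := by rw [norm_sub_inv_norm_smul_self hw0, hv]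
      _ ≤ 2 * ‖v - w‖ := by
          rw [two_mul, norm_sub_rev v w]; gcongr; exact abs_norm_sub_norm_le w v

theorem gapDist_self (E : Submodule ℝ X) : gapDist E E = 0 :=
  hausdorffDist_self_zero

theorem gapDist_le_two_mul {ε : ℝ} (hε : 0 ≤ ε)
    (hEF : ∀ v ∈ E, ‖v‖ = 1 → ∃ w ∈ F, ‖v - w‖ ≤ ε)
    (hFE : ∀ v ∈ F, ‖v‖ = 1 → ∃ w ∈ E, ‖v - w‖ ≤ ε) : gapDist E F ≤ 2 * ε := by
  have hε2 : 0 ≤ 2 * ε := by positivity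
  have key {E F : Submodule ℝ X} (hF : ((F : Set X) ∩ sphere 0 1).Nonempty)
      (h : ∀ v ∈ E, ‖v‖ = 1 → ∃ w ∈ F, ‖v - w‖ ≤ ε) :
      ∀ v ∈ (E : Set X) ∩ sphere 0 1, ∃ z ∈ (F : Set X) ∩ sphere 0 1, dist v z ≤ 2 * ε := by
    rintro v ⟨hvE, hv⟩
    rw [mem_sphere_zero_iff_norm] at hv
    obtain ⟨w, hwF, hvw⟩ := h v hvE hv
    obtain ⟨z, hz, hvz⟩ := exists_mem_sphere_dist_le_two_mul hF hv hwF
    exact ⟨z, hz, hvz.trans (by gcongr)⟩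
  unfold gapDist
  -- The Hausdorff distance to the empty set has the junk value `0`.
  rcases ((E : Set X) ∩ sphere 0 1).eq_empty_or_nonempty with hE | hE
  · rwa [hE, hausdorffDist_empty']
  rcases ((F : Set X) ∩ sphere 0 1).eq_empty_or_nonempty with hF | hF
  · rwa [hF, hausdorffDist_empty]
  exact hausdorffDist_le_of_mem_dist hε2 (key hF hEF) (key hE hFE)

end GapDist

section DominatedSplitting

theorem exists_pow_mul_le_exp_and_exp_le {δ a lam1 lam2 : ℝ} (hδ : 0 < δ) (hδ1 : δ ≤ 1)
    (ha : Real.exp lam2 < a) (hlam : lam2 ≤ lam1) :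
    ∃ n : ℕ, a ^ n * δ ≤ Real.exp (n * lam2) ∧
      Real.exp (n * lam2) ≤ Real.exp (n * lam1) *
        (Real.exp (lam1 - lam2) * δ ^ ((lam1 - lam2) / (Real.log a - lam2))) := by
  have ha0 : 0 < a := (Real.exp_pos _).trans ha
  have hgap : 0 < Real.log a - lam2 := sub_pos.2 ((Real.lt_log_iff_exp_lt ha0).2 ha)
  set t := -Real.log δ / (Real.log a - lam2) with ht
  have ht0 : 0 ≤ t := div_nonneg (neg_nonneg.2 (Real.log_nonpos hδ.le hδ1)) hgap.le
  have hlogδ : Real.log δ = -(t * (Real.log a - lam2)) := by rw [ht]; field_simp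
  have hexp : Real.log δ * ((lam1 - lam2) / (Real.log a - lam2)) = -(t * (lam1 - lam2)) := by
    rw [ht]; field_simp
  refine ⟨⌊t⌋₊, ?_, ?_⟩
  · have hfloor : (⌊t⌋₊ : ℝ) * (Real.log a - lam2) ≤ t * (Real.log a - lam2) :=
      mul_le_mul_of_nonneg_right (Nat.floor_le ht0) hgap.le
    calc a ^ ⌊t⌋₊ * δ = Real.exp (⌊t⌋₊ * Real.log a + Real.log δ) := by
          rw [Real.exp_add, Real.exp_nat_mul, Real.exp_log ha0, Real.exp_log hδ]
      _ ≤ Real.exp (⌊t⌋₊ * lam2) := by rw [Real.exp_le_exp]; linarith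
  · have hfloor : t * (lam1 - lam2) ≤ (⌊t⌋₊ + 1) * (lam1 - lam2) :=
      mul_le_mul_of_nonneg_right (Nat.lt_floor_add_one t).le (sub_nonneg.2 hlam)
    rw [Real.rpow_def_of_pos hδ, hexp, ← Real.exp_add, ← Real.exp_add, Real.exp_le_exp]
    linarith

variable {X : Type*} [NormedAddCommGroup X] [NormedSpace ℝ X]

/-- A dominated splitting `X = E^u ⊕ E^s` for the operators `D 0, D 1, …`: conditions (S1)-(S4) at
a single point, with `D n` in place of `Df^n_x`. The splitting is given by its projections `pu`
and `ps`. -/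
structure IsDominatedSplitting (D : ℕ → X →L[ℝ] X) (l₀ lam1 lam2 : ℝ)
    (Eu Es : Submodule ℝ X) (pu ps : X →L[ℝ] X) : Prop where
  expansion : ∀ n : ℕ, ∀ v ∈ Eu, l₀⁻¹ * Real.exp (n * lam1) * ‖v‖ ≤ ‖D n v‖
  domination : ∀ n : ℕ, ∀ v ∈ Es, ‖D n v‖ ≤ l₀ * Real.exp (n * lam2) * ‖v‖
  proj : ∀ v, pu v ∈ Eu ∧ ps v ∈ Es ∧ pu v + ps v = v
  norm_proj_le : ‖pu‖ ≤ l₀ ∧ ‖ps‖ ≤ l₀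

/-- The constant in the Hölder estimate for the stable space of a dominated splitting under
perturbations of the operators of size `C aⁿ δ`: the first summand serves `δ ≤ 1`, the second
`δ > 1`. -/
noncomputable def stableHolderConst (l₀ lam1 lam2 C : ℝ) : ℝ :=
  l₀ * (l₀ + C + l₀ * l₀) * Real.exp (lam1 - lam2) + l₀

theorem stableHolderConst_pos {l₀ C : ℝ} (hl₀ : 0 < l₀) (hC : 0 ≤ C) (lam1 lam2 : ℝ) :
    0 < stableHolderConst l₀ lam1 lam2 C := by
  unfold stableHolderConst; positivity

namespace IsDominatedSplitting

variable {D D' : ℕ → X →L[ℝ] X} {l₀ lam1 lam2 : ℝ} {Eu Es Eu' Es' : Submodule ℝ X}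
  {pu ps pu' ps' : X →L[ℝ] X}

theorem exp_mul_norm_unstable_le (h : IsDominatedSplitting D l₀ lam1 lam2 Eu Es pu ps)
    (hl₀ : 0 < l₀) (n : ℕ) (v : X) :
    Real.exp (n * lam1) * ‖pu v‖ ≤
      l₀ * (‖D n v‖ + l₀ * l₀ * Real.exp (n * lam2) * ‖v‖) := by
  obtain ⟨hu, hs, hsum⟩ := h.proj v
  have hstable : ‖D n (ps v)‖ ≤ l₀ * l₀ * Real.exp (n * lam2) * ‖v‖ :=
    calc ‖D n (ps v)‖ ≤ l₀ * Real.exp (n * lam2) * ‖ps v‖ := h.domination n _ hs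
      _ ≤ l₀ * Real.exp (n * lam2) * (l₀ * ‖v‖) := by
          gcongr; exact ps.le_of_opNorm_le h.norm_proj_le.2 v
      _ = l₀ * l₀ * Real.exp (n * lam2) * ‖v‖ := by ring
  calc Real.exp (n * lam1) * ‖pu v‖ = l₀ * (l₀⁻¹ * Real.exp (n * lam1) * ‖pu v‖) := by
        field_simp
    _ ≤ l₀ * ‖D n (pu v)‖ := by gcongr; exact h.expansion n _ hu
    _ = l₀ * ‖D n v - D n (ps v)‖ := by rw [← map_sub, sub_eq_of_eq_add hsum.symm]
    _ ≤ l₀ * (‖D n v‖ + l₀ * l₀ * Real.exp (n * lam2) * ‖v‖) := by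
        gcongr; exact (norm_sub_le _ _).trans (by gcongr)

theorem norm_unstable_le_mul_rpow (h : IsDominatedSplitting D l₀ lam1 lam2 Eu Es pu ps)
    (h' : IsDominatedSplitting D' l₀ lam1 lam2 Eu' Es' pu' ps') (hl₀ : 0 < l₀)
    (hlam : lam2 ≤ lam1) {a C δ : ℝ} (ha : Real.exp lam2 < a) (hC : 0 ≤ C) (hδ : 0 < δ)
    (hclose : ∀ n, ‖D n - D' n‖ ≤ C * a ^ n * δ) {v : X} (hv : v ∈ Es) (hv1 : ‖v‖ = 1) :
    ‖pu' v‖ ≤ stableHolderConst l₀ lam1 lam2 C *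
      δ ^ ((lam1 - lam2) / (Real.log a - lam2)) := by
  set β := (lam1 - lam2) / (Real.log a - lam2)
  rw [stableHolderConst, add_mul]
  rcases le_or_gt δ 1 with hδ1 | hδ1
  · obtain ⟨n, herror, hn⟩ := exists_pow_mul_le_exp_and_exp_le hδ hδ1 ha hlam
    have hD'v : ‖D' n v‖ ≤ (l₀ + C) * Real.exp (n * lam2) :=
      calc ‖D' n v‖ = ‖D n v - (D n - D' n) v‖ := by simp
        _ ≤ ‖D n v‖ + ‖(D n - D' n) v‖ := norm_sub_le _ _
        _ ≤ l₀ * Real.exp (n * lam2) * ‖v‖ + C * a ^ n * δ * ‖v‖ :=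
            add_le_add (h.domination n v hv) ((D n - D' n).le_of_opNorm_le (hclose n) v)
        _ = l₀ * Real.exp (n * lam2) + C * (a ^ n * δ) := by rw [hv1]; ring
        _ ≤ l₀ * Real.exp (n * lam2) + C * Real.exp (n * lam2) := by gcongr
        _ = (l₀ + C) * Real.exp (n * lam2) := by ring
    have hscaled : Real.exp (n * lam1) * ‖pu' v‖ ≤ Real.exp (n * lam1) *
        (l₀ * (l₀ + C + l₀ * l₀) * Real.exp (lam1 - lam2) * δ ^ β) :=
      calc Real.exp (n * lam1) * ‖pu' v‖
          ≤ l₀ * (‖D' n v‖ + l₀ * l₀ * Real.exp (n * lam2) * ‖v‖) :=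
            h'.exp_mul_norm_unstable_le hl₀ n v
        _ ≤ l₀ * ((l₀ + C) * Real.exp (n * lam2) + l₀ * l₀ * Real.exp (n * lam2) * 1) := by
            rw [hv1]; gcongr
        _ = l₀ * (l₀ + C + l₀ * l₀) * Real.exp (n * lam2) := by ring
        _ ≤ l₀ * (l₀ + C + l₀ * l₀) *
              (Real.exp (n * lam1) * (Real.exp (lam1 - lam2) * δ ^ β)) := by gcongr
        _ = _ := by ring
    have hsmall := le_of_mul_le_mul_left hscaled (Real.exp_pos _)
    exact hsmall.trans (le_add_of_nonneg_right (by positivity))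
  · have hβ : 0 ≤ β := div_nonneg (sub_nonneg.2 hlam) (sub_nonneg.2
      ((Real.lt_log_iff_exp_lt ((Real.exp_pos _).trans ha)).2 ha).le)
    calc ‖pu' v‖ ≤ l₀ * ‖v‖ := pu'.le_of_opNorm_le h'.norm_proj_le.1 v
      _ ≤ l₀ * δ ^ β := by rw [hv1]; gcongr; exact Real.one_le_rpow hδ1.le hβ
      _ ≤ _ := le_add_of_nonneg_left (by positivity)

theorem gapDist_stable_le_mul_rpow (h : IsDominatedSplitting D l₀ lam1 lam2 Eu Es pu ps)
    (h' : IsDominatedSplitting D' l₀ lam1 lam2 Eu' Es' pu' ps') (hl₀ : 0 < l₀)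
    (hlam : lam2 ≤ lam1) {a C δ : ℝ} (ha : Real.exp lam2 < a) (hC : 0 ≤ C) (hδ : 0 < δ)
    (hclose : ∀ n, ‖D n - D' n‖ ≤ C * a ^ n * δ) :
    gapDist Es Es' ≤ 2 * (stableHolderConst l₀ lam1 lam2 C *
      δ ^ ((lam1 - lam2) / (Real.log a - lam2))) := by
  have hconst := stableHolderConst_pos hl₀ hC lam1 lam2
  refine gapDist_le_two_mul (by positivity) (fun v hv hv1 => ⟨ps' v, (h'.proj v).2.1, ?_⟩)
    (fun v hv hv1 => ⟨ps v, (h.proj v).2.1, ?_⟩)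
  · rw [sub_eq_of_eq_add (h'.proj v).2.2.symm]
    exact h.norm_unstable_le_mul_rpow h' hl₀ hlam ha hC hδ hclose hv hv1
  · rw [sub_eq_of_eq_add (h.proj v).2.2.symm]
    exact h'.norm_unstable_le_mul_rpow h hl₀ hlam ha hC hδ
      (fun n => norm_sub_rev (D n) (D' n) ▸ hclose n) hv hv1

end IsDominatedSplitting

end DominatedSplitting

section LinearCocycle

/-- The linear cocycle `A (f^{n-1} x) ∘ ⋯ ∘ A (f x) ∘ A x` generated by `A` over the map `f`. -/
noncomputable def linearCocycle {M 𝕜 X : Type*} [NontriviallyNormedField 𝕜]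
    [SeminormedAddCommGroup X] [NormedSpace 𝕜 X] (f : M → M) (A : M → X →L[𝕜] X) :
    ℕ → M → (X →L[𝕜] X)
  | 0, _ => ContinuousLinearMap.id 𝕜 X
  | n + 1, x => (A (f^[n] x)).comp (linearCocycle f A n x)

theorem fwdDeriv_eq_linearCocycle {X : Type*} [NormedAddCommGroup X] [NormedSpace ℝ X]
    (f : X → X) : fwdDeriv f = linearCocycle f (fderiv ℝ f) := by
  funext n x
  induction n with
  | zero => rfl
  | succ n ih => rw [fwdDeriv, linearCocycle, ih]

theorem dist_iterate_le_pow_mul {M : Type*} [PseudoMetricSpace M] {f : M → M} {Λ : Set M} {L : ℝ}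
    (hf : MapsTo f Λ Λ) (hL : 0 ≤ L) (hLip : ∀ x ∈ Λ, ∀ y ∈ Λ, dist (f x) (f y) ≤ L * dist x y)
    {x y : M} (hx : x ∈ Λ) (hy : y ∈ Λ) (n : ℕ) :
    dist (f^[n] x) (f^[n] y) ≤ L ^ n * dist x y := by
  induction n with
  | zero => simp
  | succ n ih =>
    rw [Function.iterate_succ_apply', Function.iterate_succ_apply', pow_succ', mul_assoc]
    exact (hLip _ (hf.iterate n hx) _ (hf.iterate n hy)).trans (by gcongr)

theorem norm_comp_sub_comp_le {𝕜 E F G : Type*} [NontriviallyNormedField 𝕜]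
    [SeminormedAddCommGroup E] [SeminormedAddCommGroup F] [SeminormedAddCommGroup G]
    [NormedSpace 𝕜 E] [NormedSpace 𝕜 F] [NormedSpace 𝕜 G] (S S' : F →L[𝕜] G) (T T' : E →L[𝕜] F) :
    ‖S.comp T - S'.comp T'‖ ≤ ‖S‖ * ‖T - T'‖ + ‖S - S'‖ * ‖T'‖ :=
  calc ‖S.comp T - S'.comp T'‖ = ‖S.comp (T - T') + (S - S').comp T'‖ := by
        rw [ContinuousLinearMap.comp_sub, ContinuousLinearMap.sub_comp, sub_add_sub_cancel]
    _ ≤ ‖S.comp (T - T')‖ + ‖(S - S').comp T'‖ := norm_add_le _ _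
    _ ≤ _ := add_le_add (S.opNorm_comp_le _) ((S - S').opNorm_comp_le _)

variable {M 𝕜 X : Type*} [NontriviallyNormedField 𝕜] [SeminormedAddCommGroup X] [NormedSpace 𝕜 X]
  {f : M → M} {A : M → X →L[𝕜] X} {Λ : Set M} {b : ℝ}

theorem norm_linearCocycle_le_pow (hf : MapsTo f Λ Λ) (hA : ∀ x ∈ Λ, ‖A x‖ ≤ b) {x : M}
    (hx : x ∈ Λ) (n : ℕ) : ‖linearCocycle f A n x‖ ≤ b ^ n := by
  have hb : 0 ≤ b := (norm_nonneg _).trans (hA x hx)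
  induction n with
  | zero => simpa only [pow_zero, linearCocycle] using ContinuousLinearMap.norm_id_le
  | succ n ih =>
    calc ‖linearCocycle f A (n + 1) x‖ ≤ ‖A (f^[n] x)‖ * ‖linearCocycle f A n x‖ :=
          ContinuousLinearMap.opNorm_comp_le _ _
      _ ≤ b * b ^ n := by gcongr; exact hA _ (hf.iterate n hx)
      _ = b ^ (n + 1) := (pow_succ' b n).symm

theorem norm_linearCocycle_sub_le [PseudoMetricSpace M] {α C L a : ℝ}
    (hf : MapsTo f Λ Λ) (hL : 0 ≤ L) (hLip : ∀ x ∈ Λ, ∀ y ∈ Λ, dist (f x) (f y) ≤ L * dist x y)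
    (hα : 0 ≤ α) (hC : 0 ≤ C) (hHolder : ∀ x ∈ Λ, ∀ y ∈ Λ, dist (A x) (A y) ≤ C * dist x y ^ α)
    (hA : ∀ x ∈ Λ, ‖A x‖ ≤ b) (hba : b < a) (hbLa : b * L ^ α ≤ a)
    {x y : M} (hx : x ∈ Λ) (hy : y ∈ Λ) (n : ℕ) :
    ‖linearCocycle f A n x - linearCocycle f A n y‖ ≤ C / (a - b) * a ^ n * dist x y ^ α := by
  have hb : 0 ≤ b := (norm_nonneg _).trans (hA x hx)
  have hab : 0 < a - b := sub_pos.2 hba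
  have hgenerator (n : ℕ) :
      ‖A (f^[n] x) - A (f^[n] y)‖ ≤ C * ((L ^ α) ^ n * dist x y ^ α) :=
    calc ‖A (f^[n] x) - A (f^[n] y)‖ ≤ C * dist (f^[n] x) (f^[n] y) ^ α := by
          rw [← dist_eq_norm]; exact hHolder _ (hf.iterate n hx) _ (hf.iterate n hy)
      _ ≤ C * (L ^ n * dist x y) ^ α := by
          gcongr; exact dist_iterate_le_pow_mul hf hL hLip hx hy n
      _ = C * ((L ^ α) ^ n * dist x y ^ α) := by
          rw [Real.mul_rpow (by positivity) dist_nonneg, Real.rpow_pow_comm hL]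
  induction n with
  | zero =>
    simp only [linearCocycle, sub_self, norm_zero]
    positivity
  | succ n ih =>
    calc ‖linearCocycle f A (n + 1) x - linearCocycle f A (n + 1) y‖
        ≤ ‖A (f^[n] x)‖ * ‖linearCocycle f A n x - linearCocycle f A n y‖ +
            ‖A (f^[n] x) - A (f^[n] y)‖ * ‖linearCocycle f A n y‖ := norm_comp_sub_comp_le _ _ _ _
      _ ≤ b * (C / (a - b) * a ^ n * dist x y ^ α) +
            C * ((L ^ α) ^ n * dist x y ^ α) * b ^ n := by
          gcongr
          · exact hA _ (hf.iterate n hx)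
          · exact hgenerator n
          · exact norm_linearCocycle_le_pow hf hA hy n
      _ = b * (C / (a - b) * a ^ n * dist x y ^ α) +
            C * (b * L ^ α) ^ n * dist x y ^ α := by rw [mul_pow]; ring
      _ ≤ b * (C / (a - b) * a ^ n * dist x y ^ α) + C * a ^ n * dist x y ^ α := by gcongr
      _ = C / (a - b) * a ^ (n + 1) * dist x y ^ α := by field_simp; ring

end LinearCocycle

theorem stable_space_holder_continuity_general
    {M X : Type*} [MetricSpace M] [NormedAddCommGroup X] [NormedSpace ℝ X]
    {f : M → M} {A : M → X →L[ℝ] X} {Λ Γs : Set M} {α C l₀ lam1 lam2 L b a : ℝ}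
    {Eu Es : M → Submodule ℝ X} {pu ps : M → X →L[ℝ] X}
    (hf : MapsTo f Λ Λ) (hα : 0 ≤ α) (hC : 0 ≤ C)
    (hHolder : ∀ x ∈ Λ, ∀ y ∈ Λ, dist (A x) (A y) ≤ C * dist x y ^ α)
    (hl₀ : 0 < l₀) (hlam : lam2 ≤ lam1) (hΓs : Γs ⊆ Λ)
    (hsplit : ∀ x ∈ Γs, IsDominatedSplitting (linearCocycle f A · x) l₀ lam1 lam2
      (Eu x) (Es x) (pu x) (ps x))
    (hL : 1 ≤ L) (hLip : ∀ x ∈ Λ, ∀ y ∈ Λ, dist (f x) (f y) ≤ L * dist x y)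
    (hA : ∀ x ∈ Λ, ‖A x‖ ≤ b) (ha : Real.exp lam2 < a) (hbLa : b * L ^ α < a) :
    ∃ K > 0, ∀ x ∈ Γs, ∀ y ∈ Γs,
      gapDist (Es x) (Es y) ≤ K * dist x y ^ (α * (lam1 - lam2) / (Real.log a - lam2)) := by
  have hba : b < a := by
    rcases le_or_gt b 0 with hb | hb
    · exact hb.trans_lt ((Real.exp_pos _).trans ha)
    · exact (le_mul_of_one_le_right hb.le (Real.one_le_rpow hL hα)).trans_lt hbLa
  have hC' : 0 ≤ C / (a - b) := div_nonneg hC (sub_pos.2 hba).le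
  have hconst := stableHolderConst_pos hl₀ hC' lam1 lam2
  refine ⟨2 * stableHolderConst l₀ lam1 lam2 (C / (a - b)), by positivity, fun x hx y hy => ?_⟩
  rcases eq_or_ne x y with rfl | hxy
  · rw [gapDist_self]; positivity
  rw [mul_div_assoc, Real.rpow_mul dist_nonneg, mul_assoc]
  exact (hsplit x hx).gapDist_stable_le_mul_rpow (hsplit y hy) hl₀ hlam ha hC'
    (Real.rpow_pos_of_pos (dist_pos.2 hxy) α)
    (norm_linearCocycle_sub_le hf (by positivity) hLip hα hC hHolder hA hba hbLa.le (hΓs hx)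
      (hΓs hy))

/-- **Hölder continuity of stable spaces** (Proposition 5.12): on the set `Γˢ` of points
satisfying (S1)–(S4), the stable space `E^s(x)` is Hölder continuous in the gap metric
with exponent `β = α(λ₁ − λ₂)/(log a − λ₂)`, for every `a > max{e^{λ₁}, b L^α}`. -/
theorem stable_space_holder_continuity
    {X : Type*} [NormedAddCommGroup X] [NormedSpace ℝ X] [CompleteSpace X]
    (f : X → X) (Λ Γs : Set X) (α L' l₀ lam1 lam2 : ℝ)
    (Eu Es : X → Submodule ℝ X) (pu ps : X → X →L[ℝ] X)
    (hdiff : Differentiable ℝ f)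
    (hΛcomp : IsCompact Λ) (hfΛ : f '' Λ ⊆ Λ)
    (hα : 0 < α) (hα1 : α ≤ 1) (hL' : 0 < L')
    (hHolder : ∀ x ∈ Λ, ∀ y ∈ Λ, ‖fderiv ℝ f x - fderiv ℝ f y‖ ≤ L' * ‖x - y‖ ^ α)
    (hl₀ : 0 < l₀) (hlam : lam2 < lam1)
    (hΓs : Γs ⊆ Λ)
    -- (S1): splitting into closed complementary subspaces
    (hS1 : ∀ x ∈ Γs, IsCompl (Eu x) (Es x) ∧
      IsClosed (Eu x : Set X) ∧ IsClosed (Es x : Set X))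
    -- (S2): expansion on `E^u(x)`
    (hS2 : ∀ x ∈ Γs, ∀ n : ℕ, ∀ v ∈ Eu x,
      l₀⁻¹ * Real.exp (n * lam1) * ‖v‖ ≤ ‖fwdDeriv f n x v‖)
    -- (S3): contraction/domination on `E^s(x)`
    (hS3 : ∀ x ∈ Γs, ∀ n : ℕ, ∀ v ∈ Es x,
      ‖fwdDeriv f n x v‖ ≤ l₀ * Real.exp (n * lam2) * ‖v‖)
    -- (S4): norms of the associated projections
    (hS4proj : ∀ x ∈ Γs, ∀ v : X,
      pu x v ∈ Eu x ∧ ps x v ∈ Es x ∧ pu x v + ps x v = v)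
    (hS4 : ∀ x ∈ Γs, ‖pu x‖ ≤ l₀ ∧ ‖ps x‖ ≤ l₀)
    -- `L ≥ 1` is a Lipschitz constant for `f` on `Λ`, `b` bounds `‖Df‖` on `Λ`
    (L b : ℝ) (hL : 1 ≤ L) (hLip : ∀ x ∈ Λ, ∀ y ∈ Λ, ‖f x - f y‖ ≤ L * ‖x - y‖)
    (hb : ∀ x ∈ Λ, ‖fderiv ℝ f x‖ ≤ b) :
    ∀ a : ℝ, max (Real.exp lam1) (b * L ^ α) < a →
      ∃ K > 0, ∀ x ∈ Γs, ∀ y ∈ Γs,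
        gapDist (Es x) (Es y) ≤
          K * ‖x - y‖ ^ (α * (lam1 - lam2) / (Real.log a - lam2)) := by
  intro a ha
  obtain ⟨ha1, hbLa⟩ := max_lt_iff.1 ha
  rw [fwdDeriv_eq_linearCocycle] at hS2 hS3
  simp only [← dist_eq_norm] at hHolder hLip ⊢
  exact stable_space_holder_continuity_general (mapsTo_iff_image_subset.2 hfΛ) hα.le hL'.le hHolder
    hl₀ hlam.le hΓs (fun x hx => ⟨hS2 x hx, hS3 x hx, hS4proj x hx, hS4 x hx⟩) hL hLip hb
    ((Real.exp_lt_exp.2 hlam).trans ha1) hbLa
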